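/- arXiv:2002.07369 — 2 statements merged into one kernel-verified Lean document; each statement's English description precedes it below -/
import Mathlib

section
/- In the Coxeter group W of type E6, for all integers i with 1 ≤ i ≤ 3, the identity x'_{5,i} · x_{4,i} = x4 · x'_{5,i} · x_{4,i+1} holds. -/
/-- The descending product `x i * x (i-1) * ... * x j` (equal to `1` when `j > i`). -/
def descProd {G : Type*} [Group G] (x : ℤ → G) (i j : ℤ) : G :=
  ((List.range (i + 1 - j).toNat).map (fun n => x (i - (n : ℤ)))).prod

/-- The product `x i * x (i-2) * x (i-3) * ... * x j`, with the conventions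
`primProd x i (i-1) = x i` and `primProd x i j = 1` for `j ≥ i`. -/
def primProd {G : Type*} [Group G] (x : ℤ → G) (i j : ℤ) : G :=
  if i ≤ j then 1 else x i * descProd x (i - 2) j

/-!
Write `c = x_{m,i}`. In a braid group of type A, conjugation by `c` lowers indices:
`c * x_{j+1} = x_j * c` for `i ≤ j < m`, hence `c * x_{m,i+1} = x_{m-1,i} * c`.
As `c = x_m * x_{m-1,i}`, this is `x_{m-1,i} * x_{m,i} = x_m * x_{m-1,i} * x_{m,i+1}`.
Multiplying on the left by `x_{m+1}`, which commutes with `x_m`, gives the theorem (there `m = 4`).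
-/

theorem semiconjBy_list_prod_map {M ι : Type*} [Monoid M] {a : M} {f g : ι → M} {l : List ι}
    (h : ∀ k ∈ l, SemiconjBy a (f k) (g k)) :
    SemiconjBy a (l.map f).prod (l.map g).prod := by
  induction l with
  | nil => exact SemiconjBy.one_right a
  | cons k l ih =>
    rw [List.forall_mem_cons] at h
    simpa only [List.map_cons, List.prod_cons] using h.1.mul_right (ih h.2)

theorem semiconjBy_mul_of_braid {S : Type*} [Semigroup S] {a b : S}
    (h : a * b * a = b * a * b) : SemiconjBy (a * b) a b := by
  rw [SemiconjBy, h, mul_assoc]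

section descProd

variable {G : Type*} [Group G] {x y : ℤ → G} {a : G} {i j k m : ℤ}

-- In the definition, `n` is elaborated as an integer and `List.range` is coerced to a `List ℤ`.
theorem descProd_eq_prod_map_range (x : ℤ → G) (i j : ℤ) :
    descProd x i j = ((List.range (i + 1 - j).toNat).map fun n : ℕ => x (i - n)).prod := by
  simp only [descProd, List.bind_eq_flatMap, List.pure_def, ← List.map_eq_flatMap,
    List.map_map, Function.comp_def]

theorem descProd_self (x : ℤ → G) (i : ℤ) : descProd x i i = x i := by
  simp [descProd_eq_prod_map_range]

theorem descProd_mul_descProd (x : ℤ → G) (hjk : j ≤ k) (hki : k ≤ i + 1) :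
    descProd x i k * descProd x (k - 1) j = descProd x i j := by
  have hlength : (i + 1 - j).toNat = (i + 1 - k).toNat + (k - 1 + 1 - j).toNat := by omega
  have hindex (n : ℕ) : k - 1 - (n : ℤ) = i - (((i + 1 - k).toNat + n : ℕ) : ℤ) := by omega
  simp only [descProd_eq_prod_map_range, hlength, hindex, List.range_add,
    List.map_append, List.map_map, List.prod_append, Function.comp_def]

theorem descProd_eq_mul_descProd (x : ℤ → G) (hji : j ≤ i) :
    descProd x i j = x i * descProd x (i - 1) j := by
  rw [← descProd_mul_descProd x hji (by omega), descProd_self]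

theorem descProd_comp_add_one (x : ℤ → G) (i j : ℤ) :
    descProd (fun k => x (k + 1)) i j = descProd x (i + 1) (j + 1) := by
  simp only [descProd_eq_prod_map_range, add_sub_add_right_eq_sub, sub_add_eq_add_sub]

theorem semiconjBy_descProd (h : ∀ k, j ≤ k → k ≤ i → SemiconjBy a (x k) (y k)) :
    SemiconjBy a (descProd x i j) (descProd y i j) := by
  rw [descProd_eq_prod_map_range, descProd_eq_prod_map_range]
  refine semiconjBy_list_prod_map fun n hn => ?_
  rw [List.mem_range] at hn
  exact h _ (by omega) (by omega)

theorem commute_descProd (h : ∀ k, j ≤ k → k ≤ i → Commute a (x k)) :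
    Commute a (descProd x i j) :=
  semiconjBy_descProd h

theorem semiconjBy_descProd_generator
    (hbraid : ∀ k, i ≤ k → k < m → x (k + 1) * x k * x (k + 1) = x k * x (k + 1) * x k)
    (hcomm : ∀ k l, i ≤ l → l + 1 < k → k ≤ m → Commute (x k) (x l))
    (hij : i ≤ j) (hjm : j < m) :
    SemiconjBy (descProd x m i) (x (j + 1)) (x j) := by
  have hsplit : descProd x m i =
      descProd x m (j + 2) * (x (j + 1) * x j) * descProd x (j - 1) i := by
    rw [← descProd_mul_descProd x (show i ≤ j + 2 by omega) (by omega),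
      descProd_eq_mul_descProd x (show i ≤ j + 2 - 1 by omega),
      descProd_eq_mul_descProd x (show i ≤ j + 2 - 1 - 1 by omega)]
    simp only [show j + 2 - 1 = j + 1 by ring, add_sub_cancel_right, mul_assoc]
  have hlow : Commute (descProd x (j - 1) i) (x (j + 1)) :=
    (commute_descProd fun l hil hlj => hcomm _ l hil (by omega) (by omega)).symm
  have hhigh : Commute (descProd x m (j + 2)) (x j) :=
    (commute_descProd fun k hjk hkm => (hcomm k j hij (by omega) hkm).symm).symm
  have hmid : SemiconjBy (x (j + 1) * x j) (x (j + 1)) (x j) :=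
    semiconjBy_mul_of_braid (hbraid j hij hjm)
  rw [hsplit]
  exact (SemiconjBy.mul_left hhigh hmid).mul_left hlow

theorem semiconjBy_descProd_descProd
    (hbraid : ∀ k, i ≤ k → k < m → x (k + 1) * x k * x (k + 1) = x k * x (k + 1) * x k)
    (hcomm : ∀ k l, i ≤ l → l + 1 < k → k ≤ m → Commute (x k) (x l)) :
    SemiconjBy (descProd x m i) (descProd x m (i + 1)) (descProd x (m - 1) i) := by
  have hshift := descProd_comp_add_one x (m - 1) i
  rw [sub_add_cancel] at hshift
  rw [← hshift]
  exact semiconjBy_descProd fun j hij hjm =>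
    semiconjBy_descProd_generator hbraid hcomm hij (by omega)

theorem primProd_add_one (x : ℤ → G) (him : i ≤ m) :
    primProd x (m + 1) i = x (m + 1) * descProd x (m - 1) i := by
  rw [primProd, if_neg (by omega), show m + 1 - 2 = m - 1 by ring]

theorem E6_beta1_general
    (hbraid : ∀ k, i ≤ k → k < m → x (k + 1) * x k * x (k + 1) = x k * x (k + 1) * x k)
    (hcomm : ∀ k l, i ≤ l → l + 1 < k → k ≤ m → Commute (x k) (x l))
    (hlast : Commute (x (m + 1)) (x m)) (him : i ≤ m) :
    primProd x (m + 1) i * descProd x m i =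
      x m * primProd x (m + 1) i * descProd x m (i + 1) := by
  rw [primProd_add_one x him]
  calc x (m + 1) * descProd x (m - 1) i * descProd x m i
      = x (m + 1) * (descProd x m i * descProd x m (i + 1)) := by
        rw [(semiconjBy_descProd_descProd hbraid hcomm).eq, mul_assoc]
    _ = x (m + 1) * x m * descProd x (m - 1) i * descProd x m (i + 1) := by
        rw [descProd_eq_mul_descProd x him]
        simp only [mul_assoc]
    _ = x m * (x (m + 1) * descProd x (m - 1) i) * descProd x m (i + 1) := by
        rw [hlast.eq]
        simp only [mul_assoc]

end descProd

theorem E6_beta1 (G : Type*) [Group G] (x : ℤ → G)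
    (hsq : ∀ i : ℤ, 1 ≤ i → i ≤ 6 → x i ^ 2 = 1)
    (hbraid : ∀ i : ℤ, 1 ≤ i → i ≤ 3 → x (i+1) * x i * x (i+1) = x i * x (i+1) * x i)
    (h53 : x 5 * x 3 * x 5 = x 3 * x 5 * x 3)
    (h64 : x 6 * x 4 * x 6 = x 4 * x 6 * x 4)
    (hcomm : ∀ i j : ℤ, 1 ≤ j → j + 1 < i → i ≤ 4 → x i * x j = x j * x i)
    (hcomm5 : ∀ i : ℤ, 1 ≤ i → i ≤ 6 → i ≠ 3 → i ≠ 5 → x 5 * x i = x i * x 5)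
    (hcomm6 : ∀ i : ℤ, 1 ≤ i → i ≤ 6 → i ≠ 4 → i ≠ 6 → x 6 * x i = x i * x 6) :
    ∀ i : ℤ, 1 ≤ i → i ≤ 3 →
      primProd x 5 i * descProd x 4 i = x 4 * primProd x 5 i * descProd x 4 (i+1) := by
  intro i hi1 hi3
  exact E6_beta1_general (m := 4) (fun k hik hk4 => hbraid k (by omega) (by omega))
    (fun k l hil => hcomm k l (by omega)) (hcomm5 4 (by simp) (by simp) (by simp) (by simp))
    (by omega)
end

section
/- In the Coxeter group W of type E8, for all integers i, j, k, l, m, p with −1 ≤ i < j < k ≤ 1 and −1 ≤ l < m < p ≤ k+2, the identity x'_{6,i} · x'_{5,j} · x_{4,k} · x'_{5,2} · x'_{6,l} · x'_{5,m} · x_{4,p} · x'_{5,k+3} = x4 · x'_{6,i} · x'_{5,j} · x_{4,k} · x'_{5,2} · x'_{6,l} · x'_{5,m} · x_{4,p} · x'_{5,k+4} holds. -/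
/-!
Call `w` a transporter of `s` to `t` if `w * s = t * w`. For letters joined by a braid relation,
`a * b` transports `a` to `b`. The forced values `i = -1`, `j = 0`, `k = 1` turn the identity into
the claim that its left factor transports `x 5` to `x 4`.

If the lower ends `l`, `m`, `p` take their largest values `1`, `2`, `3`, then braid moves inside
the parabolic subgroup of type `D₅` on `x 1, …, x 5` rewrite the word so that it visibly moves
`x 5` down the long arm and back up, `5 → 3 → 2 → 1 → 2 → 3 → 4`; the letters `x 4`, `x 6` then
carry on `4 → 6 → 4`. For smaller `l`, `m`, `p` the additional letters commute with the conjugate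
of `x 5` that has been reached when they are met, so they change nothing.
-/

/-- The braid relation of length three, imposed on generators joined by an edge of a simply laced
Coxeter diagram. -/
def BraidRel {M : Type*} [Mul M] (a b : M) : Prop :=
  a * b * a = b * a * b

namespace BraidRel

variable {M : Type*} [Monoid M] {a b c d e : M}

theorem symm (hab : BraidRel a b) : BraidRel b a :=
  Eq.symm hab

theorem semiconjBy_mul (hab : BraidRel a b) : SemiconjBy (a * b) a b := by
  rw [SemiconjBy, ← mul_assoc]
  exact hab

theorem semiconjBy_flip (hbc : BraidRel b c) (hcd : BraidRel c d) (hbd : Commute b d) :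
    SemiconjBy (c * b * d * c) b d := by
  have hword : c * b * d * c = c * d * (b * c) := by
    simp only [mul_assoc, hbd.left_comm]
  rw [hword]
  exact hcd.semiconjBy_mul.mul_left hbc.semiconjBy_mul

theorem mul_triple_mul_swap (hcd : BraidRel c d) (hce : BraidRel c e) (hde : Commute d e) :
    d * (c * e * c) * d = e * (c * d * c) * e := by
  calc d * (c * e * c) * d = d * (e * c * e) * d := by rw [hce]
    _ = e * (d * c * d) * e := by simp only [mul_assoc, hde.left_comm, hde.eq]
    _ = e * (c * d * c) * e := by rw [hcd]

theorem typeD5_word_eq (hbc : BraidRel b c) (hcd : BraidRel c d) (hce : BraidRel c e)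
    (hac : Commute a c) (had : Commute a d) (hae : Commute a e)
    (hbd : Commute b d) (hbe : Commute b e) (hde : Commute d e) :
    c * b * a * (e * c * b) * (d * c * b * a) * (e * c * b) * (d * c) =
      c * d * (b * c) * (a * b) * (e * c) * (b * a) * d * (c * b) * (e * c) := by
  calc c * b * a * (e * c * b) * (d * c * b * a) * (e * c * b) * (d * c)
    _ = c * b * a * e * (c * b * d * c * b) * a * (e * c * b * d * c) := by
      simp only [mul_assoc]
    _ = c * b * a * e * (d * (c * b * d * c)) * a * (e * c * b * d * c) := by
      rw [(semiconjBy_flip hbc hcd hbd).eq]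
    _ = c * b * a * d * e * c * b * a * (d * (c * e * c) * d) * b * c := by
      simp only [mul_assoc, hac.left_comm, had.left_comm, hae.left_comm, hbd.left_comm,
        hbe.left_comm, hde.left_comm]
    _ = c * b * a * d * e * c * b * a * (e * (c * d * c) * e) * b * c := by
      rw [mul_triple_mul_swap hcd hce hde]
    _ = c * b * a * d * (e * (c * b * e * c)) * a * d * c * b * e * c := by
      simp only [mul_assoc, hac.left_comm, hae.left_comm, hbe.left_comm]
    _ = c * b * a * d * (c * b * e * c * b) * a * d * c * b * e * c := by
      rw [(semiconjBy_flip hbc hce hbe).eq]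
    _ = c * d * (b * c) * (a * b) * (e * c) * (b * a) * d * (c * b) * (e * c) := by
      simp only [mul_assoc, hac.left_comm, had.left_comm, hbd.left_comm]

theorem typeD5_semiconjBy (hab : BraidRel a b) (hbc : BraidRel b c) (hcd : BraidRel c d)
    (hce : BraidRel c e) (hac : Commute a c) (had : Commute a d) (hae : Commute a e)
    (hbd : Commute b d) (hbe : Commute b e) (hde : Commute d e) :
    SemiconjBy (c * b * a * (e * c * b) * (d * c * b * a) * (e * c * b) * (d * c)) e d := by
  rw [typeD5_word_eq hbc hcd hce hac had hae hbd hbe hde]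
  have descend : SemiconjBy (b * a * d * (c * b) * (e * c)) e a :=
    ((hab.symm.semiconjBy_mul.mul_left hbd.symm).mul_left hbc.symm.semiconjBy_mul).mul_left
      hce.symm.semiconjBy_mul
  have turn : SemiconjBy (e * c) a a := hae.symm.mul_left hac.symm
  have ascend : SemiconjBy (c * d * (b * c) * (a * b)) a d :=
    (hcd.semiconjBy_mul.mul_left hbc.semiconjBy_mul).mul_left hab.semiconjBy_mul
  simpa only [mul_assoc] using (ascend.mul_left turn).mul_left descend

end BraidRel

section Products

variable {G : Type*} [Group G] (x : ℤ → G) {i j : ℤ} {y : G}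

-- In the definition of `descProd` the index is an integer and the list of naturals is
-- coerced elementwise; here it is a natural number.
theorem descProd_eq_prod_range :
    descProd x i j = ((List.range (i + 1 - j).toNat).map fun t : ℕ => x (i - t)).prod := by
  simp only [descProd, List.pure_def, List.bind_eq_flatMap, ← List.map_eq_flatMap, List.map_map,
    Function.comp_def]

theorem descProd_of_lt (hij : i < j) : descProd x i j = 1 := by
  have hlen : (i + 1 - j).toNat = 0 := by omega
  simp [descProd, hlen]

theorem descProd_eq_mul (hij : j ≤ i) : descProd x i j = x i * descProd x (i - 1) j := by
  have hlen : (i + 1 - j).toNat = (i - 1 + 1 - j).toNat + 1 := by omega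
  have hindex : ∀ t : ℕ, i - (t + 1 : ℕ) = i - 1 - t := fun t => by omega
  simp only [descProd_eq_prod_range, hlen, List.range_succ_eq_map, List.map_cons, List.prod_cons,
    List.map_map, Function.comp_def, Nat.succ_eq_add_one, hindex, Nat.cast_zero, sub_zero]

variable {x}

theorem commute_descProd_s15 (hcomm : ∀ s, j ≤ s → s ≤ i → Commute (x s) y) :
    Commute (descProd x i j) y := by
  rw [descProd_eq_prod_range]
  refine Commute.list_prod_left _ _ fun z hz => ?_
  obtain ⟨t, ht, rfl⟩ := List.mem_map.mp hz
  rw [List.mem_range] at ht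
  exact hcomm _ (by omega) (by omega)

theorem commute_primProd (htop : Commute (x i) y) (hrest : Commute (descProd x (i - 2) j) y) :
    Commute (primProd x i j) y := by
  unfold primProd
  split_ifs
  · exact Commute.one_left y
  · exact htop.mul_left hrest

variable (x)

theorem descProd_four (hj : j ≤ 3) : descProd x 4 j = x 4 * x 3 * descProd x 2 j := by
  rw [descProd_eq_mul x (by omega), descProd_eq_mul x (by omega), ← mul_assoc]
  norm_num

theorem primProd_five (hj : j ≤ 2) :
    primProd x 5 j = x 5 * x 3 * x 2 * descProd x 1 j := by
  rw [primProd, if_neg (by omega), descProd_eq_mul x (by omega), descProd_eq_mul x (by omega)]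
  norm_num [mul_assoc]

theorem primProd_six (hj : j ≤ 4) : primProd x 6 j = x 6 * x 4 * descProd x 3 j := by
  rw [primProd, if_neg (by omega), descProd_eq_mul x (by omega), ← mul_assoc]
  norm_num

theorem descProd_three (hj : j ≤ 1) :
    descProd x 3 j = x 3 * x 2 * x 1 * descProd x 0 j := by
  rw [descProd_eq_mul x (by omega), descProd_eq_mul x (by omega), descProd_eq_mul x (by omega)]
  norm_num [mul_assoc]

theorem descProd_four_one : descProd x 4 1 = x 4 * x 3 * x 2 * x 1 := by
  rw [descProd_eq_mul x (by norm_num), show (4 : ℤ) - 1 = 3 by norm_num,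
    descProd_three x le_rfl, descProd_of_lt x zero_lt_one]
  simp only [mul_assoc, mul_one]

theorem primProd_five_four : primProd x 5 4 = x 5 := by
  rw [primProd, if_neg (by norm_num), descProd_of_lt x (by norm_num), mul_one]

theorem primProd_self : primProd x i i = 1 :=
  if_pos le_rfl

end Products

theorem semiconjBy_conj_of_mul {G : Type*} [Group G] {g h s t : G} (hgh : SemiconjBy (g * h) s t) :
    SemiconjBy g (h * s * h⁻¹) t := by
  simpa using hgh.mul_left (SemiconjBy.conj_mk h s).inv_symm_left

-- The inserted factors `u`, `v`, `w` commute with the conjugates of `s` that they act on.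
theorem semiconjBy_insert_of_commute {G : Type*} [Group G] {g h k u v w s t : G}
    (hgkh : SemiconjBy (g * k * h) s t) (huk : Commute u k) (huh : Commute u h)
    (hus : Commute u s) (hvh : Commute v h) (hvs : Commute v s) (hws : Commute w s) :
    SemiconjBy (g * u * (k * v) * (h * w)) s t := by
  have commute_conj : ∀ {z y r : G}, Commute z y → Commute z r → Commute z (y * r * y⁻¹) :=
    fun hzy hzr => (hzy.mul_right hzr).mul_right hzy.inv_right
  have transport_g : SemiconjBy (g * u) (k * (h * s * h⁻¹) * k⁻¹) t :=
    (semiconjBy_conj_of_mul (semiconjBy_conj_of_mul hgkh)).mul_left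
      (commute_conj huk (commute_conj huh hus))
  have transport_k : SemiconjBy (k * v) (h * s * h⁻¹) (k * (h * s * h⁻¹) * k⁻¹) :=
    (SemiconjBy.conj_mk k _).mul_left (commute_conj hvh hvs)
  have transport_h : SemiconjBy (h * w) s (h * s * h⁻¹) :=
    (SemiconjBy.conj_mk h s).mul_left hws
  exact (transport_g.mul_left transport_k).mul_left transport_h

/-- The elements `x n, …, x 6` satisfy the relations of the Artin group of type `E₍₇₋ₙ₎`, that is,
the defining relations of the Coxeter group without `x i ^ 2 = 1`: the nodes `n, …, 4, 6` form a
chain and `5` is attached to `3`. The type is `E₈` for `n = -1`, and `n ≤ 1` is intended. -/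
structure IsArtinTypeE {G : Type*} [Group G] (n : ℤ) (x : ℤ → G) : Prop where
  braid : ∀ i, n ≤ i → i ≤ 3 → BraidRel (x (i + 1)) (x i)
  braid_five : BraidRel (x 5) (x 3)
  braid_six : BraidRel (x 6) (x 4)
  commute : ∀ i j, n ≤ j → j + 1 < i → i ≤ 4 → Commute (x i) (x j)
  commute_five : ∀ i, n ≤ i → i ≤ 6 → i ≠ 3 → i ≠ 5 → Commute (x 5) (x i)
  commute_six : ∀ i, n ≤ i → i ≤ 6 → i ≠ 4 → i ≠ 6 → Commute (x 6) (x i)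

namespace IsArtinTypeE

variable {G : Type*} [Group G] {n : ℤ} {x : ℤ → G} {i j l m p : ℤ}

theorem semiconjBy_five_four (hx : IsArtinTypeE n x) (hn : n ≤ 1) :
    SemiconjBy (x 3 * x 2 * x 1 * (x 5 * x 3 * x 2) * (x 4 * x 3 * x 2 * x 1) *
      (x 5 * x 3 * x 2) * (x 4 * x 3)) (x 5) (x 4) :=
  BraidRel.typeD5_semiconjBy (hx.braid 1 hn (by norm_num)).symm
    (hx.braid 2 (by omega) (by norm_num)).symm (hx.braid 3 (by omega) (by norm_num)).symm
    hx.braid_five.symm (hx.commute 3 1 hn (by norm_num) (by norm_num)).symm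
    (hx.commute 4 1 hn (by norm_num) (by norm_num)).symm
    (hx.commute_five 1 hn (by norm_num) (by norm_num) (by norm_num)).symm
    (hx.commute 4 2 (by omega) (by norm_num) (by norm_num)).symm
    (hx.commute_five 2 (by omega) (by norm_num) (by norm_num) (by norm_num)).symm
    (hx.commute_five 4 (by omega) (by norm_num) (by norm_num) (by norm_num)).symm

theorem semiconjBy_five_six (hx : IsArtinTypeE n x) (hn : n ≤ 1) :
    SemiconjBy (x 4 * x 3 * x 2 * x 1 * (x 5 * x 3 * x 2) * (x 6 * x 4 * x 3 * x 2 * x 1) *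
      (x 5 * x 3 * x 2) * (x 4 * x 3)) (x 5) (x 6) := by
  have comm_six : ∀ s, 1 ≤ s → s ≤ 5 → s ≠ 4 → Commute (x s) (x 6) := fun s hs hs' hs4 =>
    (hx.commute_six s (by omega) (by omega) hs4 (by omega)).symm
  have comm_block : Commute (x 3 * x 2 * x 1 * (x 5 * x 3 * x 2)) (x 6) := by
    refine (((comm_six 3 ?_ ?_ ?_).mul_left (comm_six 2 ?_ ?_ ?_)).mul_left
      (comm_six 1 ?_ ?_ ?_)).mul_left (((comm_six 5 ?_ ?_ ?_).mul_left
      (comm_six 3 ?_ ?_ ?_)).mul_left (comm_six 2 ?_ ?_ ?_)) <;> norm_num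
  have hword : x 4 * x 3 * x 2 * x 1 * (x 5 * x 3 * x 2) * (x 6 * x 4 * x 3 * x 2 * x 1) *
      (x 5 * x 3 * x 2) * (x 4 * x 3) =
      x 4 * x 6 * (x 3 * x 2 * x 1 * (x 5 * x 3 * x 2) * (x 4 * x 3 * x 2 * x 1) *
        (x 5 * x 3 * x 2) * (x 4 * x 3)) := by
    have move_six := comm_block.symm.left_comm
    simp only [mul_assoc] at move_six ⊢
    rw [move_six]
  rw [hword]
  exact hx.braid_six.symm.semiconjBy_mul.mul_left (hx.semiconjBy_five_four hn)

theorem commute_descProd_left (hx : IsArtinTypeE n x) (hnj : n ≤ j) (hil : i + 1 < l)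
    (hl : l ≤ 4) : Commute (descProd x i j) (x l) :=
  commute_descProd_s15 fun s hs hsi => (hx.commute l s (by omega) (by omega) hl).symm

theorem commute_descProd_five (hx : IsArtinTypeE n x) (hnj : n ≤ j) (hi : i ≤ 2) :
    Commute (descProd x i j) (x 5) :=
  commute_descProd_s15 fun s hs hsi =>
    (hx.commute_five s (by omega) (by omega) (by omega) (by omega)).symm

theorem commute_descProd_six (hx : IsArtinTypeE n x) (hnj : n ≤ j) (hi : i ≤ 3) :
    Commute (descProd x i j) (x 6) :=
  commute_descProd_s15 fun s hs hsi =>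
    (hx.commute_six s (by omega) (by omega) (by omega) (by omega)).symm

theorem commute_primProd_five_six (hx : IsArtinTypeE n x) (hn : n ≤ 5) (hnj : n ≤ j) :
    Commute (primProd x 5 j) (x 6) :=
  commute_primProd (hx.commute_six 5 hn (by norm_num) (by norm_num) (by norm_num)).symm
    (hx.commute_descProd_six hnj le_rfl)

theorem semiconjBy_five_six_of_tails (hx : IsArtinTypeE n x) (hnl : n ≤ l) (hl : l ≤ 1)
    (hnm : n ≤ m) (hm : m ≤ 2) (hnp : n ≤ p) (hp : p ≤ 3) :
    SemiconjBy (descProd x 4 1 * primProd x 5 2 * primProd x 6 l * primProd x 5 m *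
      descProd x 4 p) (x 5) (x 6) := by
  have comm_low : ∀ {r}, 1 < r → r ≤ 4 → Commute (descProd x 0 l) (x r) := fun hr hr' =>
    hx.commute_descProd_left hnl (by omega) hr'
  have comm_mid : ∀ {r}, 2 < r → r ≤ 4 → Commute (descProd x 1 m) (x r) := fun hr hr' =>
    hx.commute_descProd_left hnm (by omega) hr'
  have comm_low_five := hx.commute_descProd_five hnl (show (0 : ℤ) ≤ 2 by norm_num)
  have inserted := semiconjBy_insert_of_commute (hx.semiconjBy_five_six (hnl.trans hl))
    ((comm_low_five.mul_right (comm_low (by norm_num) (by norm_num))).mul_right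
      (comm_low (by norm_num) (by norm_num)))
    ((comm_low (by norm_num) le_rfl).mul_right (comm_low (by norm_num) (by norm_num)))
    comm_low_five
    ((comm_mid (by norm_num) le_rfl).mul_right (comm_mid (by norm_num) (by norm_num)))
    (hx.commute_descProd_five hnm (by norm_num)) (hx.commute_descProd_five hnp le_rfl)
  rw [descProd_four_one, primProd_five x le_rfl, descProd_of_lt x (show (1 : ℤ) < 2 by norm_num),
    primProd_six x (by omega), descProd_three x hl, primProd_five x hm, descProd_four x hp]
  simpa only [mul_assoc, mul_one, one_mul] using inserted

end IsArtinTypeE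

theorem E8_rho_general {G : Type*} [Group G] {n : ℤ} {x : ℤ → G} (hx : IsArtinTypeE n x)
    {i j l m p : ℤ} (hni : n ≤ i) (hi : i ≤ 4) (hnj : n ≤ j) (hnl : n ≤ l) (hl : l ≤ 1)
    (hnm : n ≤ m) (hm : m ≤ 2) (hnp : n ≤ p) (hp : p ≤ 3) :
    SemiconjBy (primProd x 6 i * primProd x 5 j * descProd x 4 1 * primProd x 5 2 *
      primProd x 6 l * primProd x 5 m * descProd x 4 p) (x 5) (x 4) := by
  have first_factor : SemiconjBy (primProd x 6 i) (x 6) (x 4) := by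
    rw [primProd_six x hi]
    exact hx.braid_six.semiconjBy_mul.mul_left (hx.commute_descProd_six hni le_rfl)
  have second_factor : SemiconjBy (primProd x 5 j) (x 6) (x 6) :=
    hx.commute_primProd_five_six (by omega) hnj
  have remaining := hx.semiconjBy_five_six_of_tails hnl hl hnm hm hnp hp
  simpa only [mul_assoc] using (first_factor.mul_left second_factor).mul_left remaining

theorem E8_rho (G : Type*) [Group G] (x : ℤ → G)
    (hsq : ∀ i : ℤ, (-1) ≤ i → i ≤ 6 → x i ^ 2 = 1)
    (hbraid : ∀ i : ℤ, (-1) ≤ i → i ≤ 3 → x (i+1) * x i * x (i+1) = x i * x (i+1) * x i)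
    (h53 : x 5 * x 3 * x 5 = x 3 * x 5 * x 3)
    (h64 : x 6 * x 4 * x 6 = x 4 * x 6 * x 4)
    (hcomm : ∀ i j : ℤ, (-1) ≤ j → j + 1 < i → i ≤ 4 → x i * x j = x j * x i)
    (hcomm5 : ∀ i : ℤ, (-1) ≤ i → i ≤ 6 → i ≠ 3 → i ≠ 5 → x 5 * x i = x i * x 5)
    (hcomm6 : ∀ i : ℤ, (-1) ≤ i → i ≤ 6 → i ≠ 4 → i ≠ 6 → x 6 * x i = x i * x 6) :
    ∀ i j k l m p : ℤ, -1 ≤ i → i < j → j < k → k ≤ 1 → -1 ≤ l → l < m → m < p → p ≤ k + 2 →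
      primProd x 6 i * primProd x 5 j * descProd x 4 k * primProd x 5 2 * primProd x 6 l *
        primProd x 5 m * descProd x 4 p * primProd x 5 (k+3) =
      x 4 * primProd x 6 i * primProd x 5 j * descProd x 4 k * primProd x 5 2 * primProd x 6 l *
        primProd x 5 m * descProd x 4 p * primProd x 5 (k+4) := by
  intro i j k l m p hi hij hjk hk hl hlm hmp hp
  obtain ⟨rfl, rfl, rfl⟩ : i = -1 ∧ j = 0 ∧ k = 1 := by omega
  have hx : IsArtinTypeE (-1) x := ⟨hbraid, h53, h64, hcomm, hcomm5, hcomm6⟩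
  have transport : SemiconjBy (primProd x 6 (-1) * primProd x 5 0 * descProd x 4 1 *
      primProd x 5 2 * primProd x 6 l * primProd x 5 m * descProd x 4 p) (x 5) (x 4) := by
    apply E8_rho_general hx <;> omega
  rw [show (1 : ℤ) + 3 = 4 by norm_num, show (1 : ℤ) + 4 = 5 by norm_num, primProd_five_four,
    primProd_self, mul_one]
  simpa only [mul_assoc] using transport.eq
end
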